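/- arXiv:2403.06662 — 5 statements merged into one kernel-verified Lean document; each statement's English description precedes it below -/
import Mathlib

section
/- Let d ≥ 1, ℓ > 0, p ∈ (1,2], ϰ > 0, and let f : ℝ^d → ℝ be bounded below with infimum f̲. Assume the set 𝒱* = {w ∈ ℝ^d : f(w) = f̲} of global minimizers of f is nonempty, compact and convex, and that f(w) − f̲ ≥ ℓ·dist(w,𝒱*)^p for all w ∈ ℝ^d, and ϑ ≥ −f̲. Then for all w, v ∈ ℝ^d one has A(w,v) − A(V*(v),v) ≥ ‖w − V*(v)‖² − 2·(2ϰ/ℓ²)^{1/(p−1)}. -/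
open Metric

/-- The residual of a nearest-point projection onto a convex set makes an obtuse angle with
every direction into the set. -/
theorem inner_sub_nonpos_of_forall_norm_sub_le {E : Type*} [NormedAddCommGroup E]
    [InnerProductSpace ℝ E] {S : Set E} (hS : Convex ℝ S) {v x : E} (hx : x ∈ S)
    (hmin : ∀ y ∈ S, ‖v - x‖ ≤ ‖v - y‖) {y : E} (hy : y ∈ S) :
    inner ℝ (v - x) (y - x) ≤ 0 := by
  refine (norm_eq_iInf_iff_real_inner_le_zero hS hx).1 ?_ y hy
  have : Nonempty S := ⟨⟨x, hx⟩⟩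
  refine le_antisymm (le_ciInf fun z => hmin z z.2) ?_
  exact ciInf_le (f := fun z : S => ‖v - z‖)
    ⟨0, by rintro _ ⟨z, rfl⟩; exact norm_nonneg _⟩ ⟨x, hx⟩

theorem infDist_eq_norm_sub_of_forall_norm_sub_le {E : Type*} [SeminormedAddCommGroup E]
    {S : Set E} {v x : E} (hx : x ∈ S) (hmin : ∀ y ∈ S, ‖v - x‖ ≤ ‖v - y‖) :
    infDist v S = ‖v - x‖ := by
  rw [← dist_eq_norm]
  refine le_antisymm (infDist_le_dist_of_mem hx) ((le_infDist ⟨x, hx⟩).2 fun {y} hy => ?_)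
  simpa only [dist_eq_norm] using hmin y hy

/-- A linear term is dominated by a superlinear power up to an explicit constant. -/
theorem two_mul_sub_le_mul_rpow {c p t : ℝ} (hc : 0 < c) (hp : 1 < p) (ht : 0 ≤ t) :
    2 * t - 2 * (2 / c) ^ (1 / (p - 1)) ≤ c * t ^ p := by
  have hp' : 0 < p - 1 := sub_pos.2 hp
  have hsplit : t ^ p = t ^ (p - 1) * t := by
    rw [← Real.rpow_add_one' ht (by linarith), sub_add_cancel]
  have hconst : 0 ≤ (2 / c) ^ (1 / (p - 1)) := by positivity
  rcases le_total (2 / c) (t ^ (p - 1)) with h | h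
  · have h2 : 2 ≤ c * t ^ (p - 1) := by rwa [div_le_iff₀' hc] at h
    have := mul_le_mul_of_nonneg_right h2 ht
    rw [hsplit]
    linarith
  · have hroot := Real.rpow_le_rpow (by positivity) h (one_div_pos.2 hp').le
    rw [← Real.rpow_mul ht, mul_one_div_cancel hp'.ne', Real.rpow_one] at hroot
    have : 0 ≤ c * t ^ p := by positivity
    linarith

/-- Lemma 3.1 (Lemma `lem:111`): lower bound for `A(w,v) - A(V*(v),v)` when the set of
global minimizers is nonempty, compact and convex. -/
theorem stmt_0 {d : ℕ} (hd : 1 ≤ d)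
    (ℓ ϰ p ϑ fbar : ℝ) (hℓ : 0 < ℓ) (hϰ : 0 < ϰ) (hp1 : 1 < p) (hp2 : p ≤ 2)
    (f : EuclideanSpace ℝ (Fin d) → ℝ)
    (hfbar : IsGLB (Set.range f) fbar)
    (S : Set (EuclideanSpace ℝ (Fin d))) (hS : S = {w | f w = fbar})
    (hSne : S.Nonempty) (hScomp : IsCompact S) (hSconv : Convex ℝ S)
    (hgrow : ∀ w, ℓ * Metric.infDist w S ^ p ≤ f w - fbar)
    (hϑ : -fbar ≤ ϑ)
    (Vs : EuclideanSpace ℝ (Fin d) → EuclideanSpace ℝ (Fin d))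
    (hVs : ∀ v, Vs v ∈ S ∧ ∀ y ∈ S, ‖v - Vs v‖ ≤ ‖v - y‖)
    (A : EuclideanSpace ℝ (Fin d) → EuclideanSpace ℝ (Fin d) → ℝ)
    (hA : ∀ w v, A w v = (1/ϰ) * f w * (f v + ϑ) + ‖v - w‖^2) :
    ∀ w v : EuclideanSpace ℝ (Fin d),
      ‖w - Vs v‖^2 - 2 * (2*ϰ/ℓ^2) ^ ((1:ℝ)/(p-1)) ≤ A w v - A (Vs v) v := by
  intro w v
  obtain ⟨hvS, hvmin⟩ := hVs v
  obtain ⟨hwS, hwmin⟩ := hVs w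
  have hfV : f (Vs v) = fbar := by rw [hS] at hvS; exact hvS
  have hgv := hgrow v
  have hgw := hgrow w
  rw [infDist_eq_norm_sub_of_forall_norm_sub_le hvS hvmin] at hgv
  rw [infDist_eq_norm_sub_of_forall_norm_sub_le hwS hwmin] at hgw
  have hinner : inner ℝ (v - Vs v) (w - Vs v) ≤ ‖v - Vs v‖ * ‖w - Vs w‖ := by
    have hobtuse := inner_sub_nonpos_of_forall_norm_sub_le hSconv hvS hvmin hwS
    have hcs := real_inner_le_norm (v - Vs v) (w - Vs w)
    rw [← sub_add_sub_cancel w (Vs w) (Vs v), inner_add_right]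
    linarith
  have hexpand : ‖v - w‖ ^ 2 =
      ‖v - Vs v‖ ^ 2 - 2 * inner ℝ (v - Vs v) (w - Vs v) + ‖w - Vs v‖ ^ 2 := by
    rw [← norm_sub_sq_real, sub_sub_sub_cancel_right]
  have hprod : ℓ ^ 2 / ϰ * (‖v - Vs v‖ * ‖w - Vs w‖) ^ p ≤
      1 / ϰ * ((f w - fbar) * (f v + ϑ)) := by
    have hmul : (ℓ * ‖w - Vs w‖ ^ p) * (ℓ * ‖v - Vs v‖ ^ p) ≤ (f w - fbar) * (f v + ϑ) :=
      mul_le_mul hgw (by linarith) (by positivity) (le_trans (by positivity) hgw)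
    calc ℓ ^ 2 / ϰ * (‖v - Vs v‖ * ‖w - Vs w‖) ^ p
        = 1 / ϰ * ((ℓ * ‖w - Vs w‖ ^ p) * (ℓ * ‖v - Vs v‖ ^ p)) := by
          rw [Real.mul_rpow (norm_nonneg _) (norm_nonneg _)]
          ring
      _ ≤ _ := mul_le_mul_of_nonneg_left hmul (by positivity)
  have hyoung := two_mul_sub_le_mul_rpow (c := ℓ ^ 2 / ϰ) (by positivity) hp1
    (mul_nonneg (norm_nonneg (v - Vs v)) (norm_nonneg (w - Vs w)))
  rw [div_div_eq_mul_div] at hyoung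
  rw [hA, hA, hfV, hexpand]
  linarith
end

section
/- Let d ≥ 1, ℓ > 0, p ∈ (1,2], ϰ > 0, and let f : ℝ^d → ℝ be bounded below with infimum f̲. Assume 𝒱* = 𝒱₁* ∪ 𝒱₂*, where 𝒱₁* and 𝒱₂* are nonempty, compact and convex, that f(w) = f̲ for all w ∈ 𝒱*, that f(w) − f̲ ≥ ℓ·dist(w,𝒱*)^p for all w ∈ ℝ^d, and that ϑ ≥ ℓ·diam(𝒱*)^p − f̲. Let Z₁ := {w : dist(w,𝒱₁*) ≤ dist(w,𝒱₂*)} and Z₂ := {w : dist(w,𝒱₂*) ≤ dist(w,𝒱₁*)}. Then for every v ∈ ℝ^d: A(w,v) − A(V₁*(v),v) ≥ ‖w − V₁*(v)‖² − 2·(2^p·ϰ/ℓ²)^{1/(p−1)} for all w ∈ Z₁, and A(w,v) − A(V₂*(v),v) ≥ ‖w − V₂*(v)‖² − 2·(2^p·ϰ/ℓ²)^{1/(p−1)} for all w ∈ Z₂. -/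
open Metric

/-- The slack `t - t ^ p / c` is at most `c ^ (1 / (p - 1))`, the positive zero of that function. -/
theorem sub_rpow_div_le_rpow {c t p : ℝ} (hc : 0 < c) (ht : 0 ≤ t) (hp : 1 < p) :
    t - t ^ p / c ≤ c ^ (1 / (p - 1)) := by
  have hp' : 0 < p - 1 := sub_pos.2 hp
  rcases le_or_gt t (c ^ (1 / (p - 1))) with h | h
  · have : 0 ≤ t ^ p / c := by positivity
    linarith
  · have hC : 0 < c ^ (1 / (p - 1)) := by positivity
    have ht' : 0 < t := hC.trans h
    have hle : c ≤ t ^ (p - 1) := by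
      calc c = (c ^ (1 / (p - 1))) ^ (p - 1) := by
            rw [← Real.rpow_mul hc.le, one_div_mul_cancel hp'.ne', Real.rpow_one]
        _ ≤ t ^ (p - 1) := Real.rpow_le_rpow hC.le h.le hp'.le
    have hmul : t ^ p = t ^ (p - 1) * t := by
      rw [← Real.rpow_add_one ht'.ne', sub_add_cancel]
    have : t ≤ t ^ p / c := by
      rw [le_div_iff₀ hc, hmul, mul_comm]
      exact mul_le_mul_of_nonneg_right hle ht
    linarith

/-- Variational inequality for a nearest point `u` of a convex set. -/
theorem inner_sub_le_zero_of_forall_norm_sub_le {E : Type*} [NormedAddCommGroup E]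
    [InnerProductSpace ℝ E] {K : Set E} (hK : Convex ℝ K) {u v : E} (hu : u ∈ K)
    (hmin : ∀ y ∈ K, ‖v - u‖ ≤ ‖v - y‖) {y : E} (hy : y ∈ K) :
    inner ℝ (v - u) (y - u) ≤ 0 := by
  refine (norm_eq_iInf_iff_real_inner_le_zero hK hu).1 ?_ y hy
  have : Nonempty K := ⟨⟨u, hu⟩⟩
  exact le_antisymm (le_ciInf fun y => hmin y y.2)
    (ciInf_le ⟨0, by rintro _ ⟨y, rfl⟩; exact norm_nonneg _⟩ (⟨u, hu⟩ : K))

/-- The distance to a subset exceeds the distance to a bounded set by at most its diameter. -/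
theorem infDist_le_infDist_add_diam {X : Type*} [PseudoMetricSpace X] {S K : Set X}
    (hKS : K ⊆ S) (hK : K.Nonempty) (hS : Bornology.IsBounded S) (v : X) :
    infDist v K ≤ infDist v S + diam S := by
  obtain ⟨u, hu⟩ := hK
  rw [← sub_le_iff_le_add]
  refine (le_infDist ⟨u, hKS hu⟩).2 fun y hy => ?_
  have h₁ : infDist v K ≤ dist v u := infDist_le_dist_of_mem hu
  have h₂ : dist y u ≤ diam S := dist_le_diam_of_mem hS hy (hKS hu)
  linarith [dist_triangle v y u]

/-- Lower bound for `A(w,v) - A(u,v)`, where `u` is the nearest point to `v` in a convex part `K`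
of the set `S` of minimizers, at points `w` no closer to `S` than to `K`. -/
theorem norm_sq_sub_le_of_growth {E : Type*} [NormedAddCommGroup E] [InnerProductSpace ℝ E]
    {ℓ ϰ p ϑ m : ℝ} (hℓ : 0 < ℓ) (hϰ : 0 < ϰ) (hp : 1 < p) {f : E → ℝ} {S K : Set E}
    (hS : Bornology.IsBounded S) (hKS : K ⊆ S) (hKcomp : IsCompact K) (hKconv : Convex ℝ K)
    (hfS : ∀ w ∈ S, f w = m) (hgrow : ∀ w, ℓ * infDist w S ^ p ≤ f w - m)
    (hϑ : ℓ * diam S ^ p - m ≤ ϑ) {u v w : E} (hu : u ∈ K)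
    (hmin : ∀ y ∈ K, ‖v - u‖ ≤ ‖v - y‖) (hw : infDist w K ≤ infDist w S) :
    ‖w - u‖ ^ 2 - 2 * ((2 : ℝ) ^ p * ϰ / ℓ ^ 2) ^ ((1 : ℝ) / (p - 1)) ≤
      ((1 / ϰ) * f w * (f v + ϑ) + ‖v - w‖ ^ 2) -
        ((1 / ϰ) * f u * (f v + ϑ) + ‖v - u‖ ^ 2) := by
  obtain ⟨y, hy, hwy⟩ := hKcomp.exists_infDist_eq_dist ⟨u, hu⟩ w
  set a := ‖v - u‖
  set b := infDist w K
  have ha : 0 ≤ a := norm_nonneg _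
  have hb : 0 ≤ b := infDist_nonneg
  have hinner : inner ℝ (v - u) (w - u) ≤ a * b := by
    have h₁ := inner_sub_le_zero_of_forall_norm_sub_le hKconv hu hmin hy
    have h₂ : inner ℝ (v - u) (w - y) ≤ a * b := by
      rw [hwy, dist_eq_norm]
      exact real_inner_le_norm _ _
    rw [← sub_add_sub_cancel w y u, inner_add_right]
    linarith
  have hnorm : ‖v - w‖ ^ 2 = a ^ 2 - 2 * inner ℝ (v - u) (w - u) + ‖w - u‖ ^ 2 := by
    rw [← sub_sub_sub_cancel_right v w u]
    exact norm_sub_sq_real _ _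
  have haK : a ≤ infDist v K :=
    (le_infDist ⟨u, hu⟩).2 fun y hy => by rw [dist_eq_norm]; exact hmin y hy
  have hdist : a ≤ infDist v S + diam S :=
    haK.trans (infDist_le_infDist_add_diam hKS ⟨u, hu⟩ hS v)
  have hp0 : 0 ≤ p := by linarith
  have hapow : a ^ p ≤ 2 ^ (p - 1) * (infDist v S ^ p + diam S ^ p) :=
    (Real.rpow_le_rpow ha hdist hp0).trans
      (mod_cast NNReal.rpow_add_le_mul_rpow_add_rpow ⟨_, infDist_nonneg⟩ ⟨_, diam_nonneg⟩ hp.le)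
  have htwo : (2 : ℝ) ^ p = 2 ^ (p - 1) * 2 := by
    rw [← Real.rpow_add_one two_ne_zero, sub_add_cancel]
  have hfv : ℓ * (2 * a ^ p / 2 ^ p) ≤ f v + ϑ := by
    have h : 2 * a ^ p / 2 ^ p ≤ infDist v S ^ p + diam S ^ p := by
      rw [div_le_iff₀ (by positivity), htwo]
      linarith
    have := mul_le_mul_of_nonneg_left h hℓ.le
    linarith [hgrow v]
  have hfw : ℓ * b ^ p ≤ f w - m :=
    (mul_le_mul_of_nonneg_left (Real.rpow_le_rpow hb hw hp0) hℓ.le).trans (hgrow w)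
  have hprod : ℓ * b ^ p * (ℓ * (2 * a ^ p / 2 ^ p)) ≤ (f w - m) * (f v + ϑ) :=
    mul_le_mul hfw hfv (by positivity) ((by positivity : 0 ≤ ℓ * b ^ p).trans hfw)
  have hmain : 2 * ((a * b) ^ p / (2 ^ p * ϰ / ℓ ^ 2)) ≤ 1 / ϰ * ((f w - m) * (f v + ϑ)) := by
    refine le_trans (le_of_eq ?_) (mul_le_mul_of_nonneg_left hprod (by positivity))
    rw [Real.mul_rpow ha hb]
    field_simp
  have hslack := sub_rpow_div_le_rpow (c := 2 ^ p * ϰ / ℓ ^ 2) (by positivity)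
    (mul_nonneg ha hb) hp
  rw [hfS u (hKS hu), hnorm]
  linarith

/-- Lemma `lem:999`: two-zone lower bound for `A(w,v) − A(Vᵢ*(v),v)` when the set of
minimizers is the union of two nonempty compact convex sets. -/
theorem stmt_8 {d : ℕ} (hd : 1 ≤ d)
    (ℓ ϰ p ϑ fbar : ℝ) (hℓ : 0 < ℓ) (hϰ : 0 < ϰ) (hp1 : 1 < p) (hp2 : p ≤ 2)
    (f : EuclideanSpace ℝ (Fin d) → ℝ)
    (hfbar : IsGLB (Set.range f) fbar)
    (S S1 S2 : Set (EuclideanSpace ℝ (Fin d))) (hS : S = S1 ∪ S2)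
    (hS1ne : S1.Nonempty) (hS1comp : IsCompact S1) (hS1conv : Convex ℝ S1)
    (hS2ne : S2.Nonempty) (hS2comp : IsCompact S2) (hS2conv : Convex ℝ S2)
    (hfS : ∀ w ∈ S, f w = fbar)
    (hgrow : ∀ w, ℓ * Metric.infDist w S ^ p ≤ f w - fbar)
    (hϑ : ℓ * Metric.diam S ^ p - fbar ≤ ϑ)
    (Z1 Z2 : Set (EuclideanSpace ℝ (Fin d)))
    (hZ1 : Z1 = {w | Metric.infDist w S1 ≤ Metric.infDist w S2})
    (hZ2 : Z2 = {w | Metric.infDist w S2 ≤ Metric.infDist w S1})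
    (V1 V2 : EuclideanSpace ℝ (Fin d) → EuclideanSpace ℝ (Fin d))
    (hV1 : ∀ v, V1 v ∈ S1 ∧ ∀ y ∈ S1, ‖v - V1 v‖ ≤ ‖v - y‖)
    (hV2 : ∀ v, V2 v ∈ S2 ∧ ∀ y ∈ S2, ‖v - V2 v‖ ≤ ‖v - y‖)
    (A : EuclideanSpace ℝ (Fin d) → EuclideanSpace ℝ (Fin d) → ℝ)
    (hA : ∀ w v, A w v = (1/ϰ) * f w * (f v + ϑ) + ‖v - w‖^2) :
    ∀ v : EuclideanSpace ℝ (Fin d),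
      (∀ w ∈ Z1, ‖w - V1 v‖^2 - 2 * ((2:ℝ)^p * ϰ / ℓ^2) ^ ((1:ℝ)/(p-1))
          ≤ A w v - A (V1 v) v) ∧
      (∀ w ∈ Z2, ‖w - V2 v‖^2 - 2 * ((2:ℝ)^p * ϰ / ℓ^2) ^ ((1:ℝ)/(p-1))
          ≤ A w v - A (V2 v) v) := by
  have hbdd : Bornology.IsBounded S := hS ▸ hS1comp.isBounded.union hS2comp.isBounded
  have hinf : ∀ w c, c ≤ infDist w S1 → c ≤ infDist w S2 → c ≤ infDist w S := by
    intro w c h₁ h₂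
    subst hS
    refine (le_infDist (hS1ne.mono Set.subset_union_left)).2 ?_
    rintro y (hy | hy)
    · exact h₁.trans (infDist_le_dist_of_mem hy)
    · exact h₂.trans (infDist_le_dist_of_mem hy)
  intro v
  refine ⟨fun w hw => ?_, fun w hw => ?_⟩
  · rw [hZ1] at hw
    rw [hA, hA]
    exact norm_sq_sub_le_of_growth hℓ hϰ hp1 hbdd (hS ▸ Set.subset_union_left) hS1comp hS1conv
      hfS hgrow hϑ (hV1 v).1 (hV1 v).2 (hinf w _ le_rfl hw)
  · rw [hZ2] at hw
    rw [hA, hA]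
    exact norm_sq_sub_le_of_growth hℓ hϰ hp1 hbdd (hS ▸ Set.subset_union_right) hS2comp hS2conv
      hfS hgrow hϑ (hV2 v).1 (hV2 v).2 (hinf w _ hw le_rfl)
end

section
/- Under the hypotheses: d ≥ 1, ℓ > 0, p ∈ (1,2], ϰ > 0, f : ℝ^d → ℝ bounded below with infimum f̲, 𝒱* = 𝒱₁* ∪ 𝒱₂* with 𝒱₁*, 𝒱₂* nonempty compact convex, f ≡ f̲ on 𝒱*, f(w) − f̲ ≥ ℓ·dist(w,𝒱*)^p for all w, and ϑ ≥ ℓ·diam(𝒱*)^p − f̲; with Z₁ := {w : dist(w,𝒱₁*) ≤ dist(w,𝒱₂*)} and Z₂ := {w : dist(w,𝒱₂*) ≤ dist(w,𝒱₁*)}, for every v ∈ ℝ^d and each i ∈ {1,2}: A(Vᵢ*(v),v) − 2·(2^p·ϰ/ℓ²)^{1/(p−1)} ≤ inf_{w ∈ Zᵢ} A(w,v) ≤ A(Vᵢ*(v),v). -/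
open Metric

theorem sub_rpow_div_le_rpow_one_div {K x p : ℝ} (hK : 0 < K) (hx : 0 ≤ x) (hp : 1 < p) :
    x - x ^ p / K ≤ K ^ ((1 : ℝ) / (p - 1)) := by
  have hp' : 0 < p - 1 := sub_pos.2 hp
  rcases le_total x (K ^ ((1 : ℝ) / (p - 1))) with h | h
  · have : 0 ≤ x ^ p / K := by positivity
    linarith
  · have hT : 0 < K ^ ((1 : ℝ) / (p - 1)) := by positivity
    have hx0 : 0 < x := hT.trans_le h
    have hKx : K ≤ x ^ (p - 1) := by
      have := Real.rpow_le_rpow hT.le h hp'.le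
      rwa [← Real.rpow_mul hK.le, one_div_mul_cancel hp'.ne', Real.rpow_one] at this
    have hxp : x ^ p = x ^ (p - 1) * x := by
      rw [← Real.rpow_add_one hx0.ne', sub_add_cancel]
    have : x ≤ x ^ p / K := by
      rw [le_div_iff₀ hK, hxp, mul_comm]
      exact mul_le_mul_of_nonneg_right hKx hx
    linarith

theorem rpow_le_two_rpow_sub_one_mul {R a b p : ℝ} (hR : 0 ≤ R) (ha : 0 ≤ a) (hb : 0 ≤ b)
    (hp : 1 ≤ p) (h : R ≤ a + b) : R ^ p ≤ 2 ^ (p - 1) * (a ^ p + b ^ p) :=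
  (Real.rpow_le_rpow hR h (by linarith)).trans <| by
    lift a to NNReal using ha
    lift b to NNReal using hb
    exact_mod_cast NNReal.rpow_add_le_mul_rpow_add_rpow a b hp

/-- Lower bound for the increment of the penalized objective `c * f w * g + ‖v - w‖ ^ 2` between
the projection `v'` of `v` onto a component `T` of the minimizing set `S` and a point `w` that is
no closer to `S` than to `T`. -/
theorem penalized_sub_le_of_isProjection {E : Type*} [SeminormedAddCommGroup E]
    {ℓ ϰ p ϑ fbar : ℝ} (hℓ : 0 < ℓ) (hϰ : 0 < ϰ) (hp : 1 < p) {f : E → ℝ} {S T : Set E}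
    (hSb : Bornology.IsBounded S) (hTS : T ⊆ S) {v v' w : E} (hv'T : v' ∈ T)
    (hv' : ∀ y ∈ T, ‖v - v'‖ ≤ ‖v - y‖) (hfv' : f v' = fbar)
    (hgrow : ∀ w, ℓ * infDist w S ^ p ≤ f w - fbar) (hϑ : ℓ * diam S ^ p - fbar ≤ ϑ)
    (hw : infDist w T ≤ infDist w S) :
    (1 / ϰ) * f v' * (f v + ϑ) + ‖v - v'‖ ^ 2 - 2 * ((2 : ℝ) ^ p * ϰ / ℓ ^ 2) ^ ((1 : ℝ) / (p - 1))
      ≤ (1 / ϰ) * f w * (f v + ϑ) + ‖v - w‖ ^ 2 := by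
  have hp0 : 0 ≤ p := by linarith
  have hTne : T.Nonempty := ⟨v', hv'T⟩
  have hSne : S.Nonempty := hTne.mono hTS
  set r := infDist w T
  set R := ‖v - v'‖
  have hr : 0 ≤ r := infDist_nonneg
  have hR : 0 ≤ R := norm_nonneg _
  have hdiam : 0 ≤ diam S := diam_nonneg
  have hdist : 0 ≤ infDist v S := infDist_nonneg
  have hRS : R ≤ infDist v S + diam S := by
    rw [← sub_le_iff_le_add]
    refine (le_infDist hSne).2 fun y hy => ?_
    have h₁ : dist v v' ≤ dist v y + dist y v' := dist_triangle _ _ _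
    have h₂ := dist_le_diam_of_mem hSb hy (hTS hv'T)
    rw [dist_eq_norm v v'] at h₁
    linarith
  have hRw : R ≤ r + ‖v - w‖ := by
    have h₁ : R ≤ infDist v T :=
      (le_infDist hTne).2 fun y hy => by rw [dist_eq_norm]; exact hv' y hy
    have h₂ : infDist v T ≤ r + dist v w := infDist_le_infDist_add_dist
    rw [dist_eq_norm] at h₂
    linarith
  have hfw : ℓ * r ^ p ≤ f w - fbar :=
    (mul_le_mul_of_nonneg_left (Real.rpow_le_rpow hr hw hp0) hℓ.le).trans (hgrow w)
  have h2p : (0 : ℝ) < 2 ^ p := by positivity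
  have hfv : ℓ * (2 / 2 ^ p * R ^ p) ≤ f v + ϑ := by
    have h₁ := rpow_le_two_rpow_sub_one_mul hR hdist hdiam hp.le hRS
    rw [Real.rpow_sub_one two_ne_zero] at h₁
    have h₂ : 2 / 2 ^ p * R ^ p ≤ infDist v S ^ p + diam S ^ p := by
      rw [div_mul_eq_mul_div, div_le_iff₀ h2p]
      linarith
    have h₃ := mul_le_mul_of_nonneg_left h₂ hℓ.le
    linarith [hgrow v]
  have hprod : ℓ * r ^ p * (ℓ * (2 / 2 ^ p * R ^ p)) ≤ (f w - fbar) * (f v + ϑ) :=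
    mul_le_mul hfw hfv (by positivity) (le_trans (by positivity) hfw)
  have hpen : 2 * ((r * R) ^ p / (2 ^ p * ϰ / ℓ ^ 2)) ≤ (1 / ϰ) * ((f w - fbar) * (f v + ϑ)) := by
    refine le_trans (le_of_eq ?_) (mul_le_mul_of_nonneg_left hprod (by positivity))
    rw [Real.mul_rpow hr hR]
    field_simp
  have hsq : R ^ 2 - 2 * (r * R) ≤ ‖v - w‖ ^ 2 := by
    rcases le_total r R with h | h
    · nlinarith [norm_nonneg (v - w)]
    · nlinarith [sq_nonneg ‖v - w‖]
  have hscalar := sub_rpow_div_le_rpow_one_div (K := 2 ^ p * ϰ / ℓ ^ 2) (x := r * R)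
    (by positivity) (by positivity) hp
  rw [hfv']
  linarith

theorem le_csInf_image_and_csInf_image_le {α : Type*} {g : α → ℝ} {Z : Set α} {a : ℝ} {z : α} (hz : z ∈ Z)
    (h : ∀ w ∈ Z, a ≤ g w) : a ≤ sInf (g '' Z) ∧ sInf (g '' Z) ≤ g z :=
  ⟨le_csInf ⟨g z, z, hz, rfl⟩ (Set.forall_mem_image.2 h),
    csInf_le ⟨a, Set.forall_mem_image.2 h⟩ ⟨z, hz, rfl⟩⟩

theorem infDist_le_infDist_union {X : Type*} [PseudoMetricSpace X] {s t : Set X} {x : X}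
    (hs : s.Nonempty) (h : infDist x s ≤ infDist x t) :
    infDist x s ≤ infDist x (s ∪ t) :=
  (le_infDist (hs.mono Set.subset_union_left)).2 fun _ hy =>
    hy.elim (fun hy => infDist_le_dist_of_mem hy) fun hy => h.trans (infDist_le_dist_of_mem hy)

/-- Localization of `inf_{w ∈ Zᵢ} A(w,v)` between `A(Vᵢ*(v),v) − 2(2^p ϰ/ℓ²)^{1/(p−1)}`
and `A(Vᵢ*(v),v)`. -/
theorem stmt_9 {d : ℕ} (hd : 1 ≤ d)
    (ℓ ϰ p ϑ fbar : ℝ) (hℓ : 0 < ℓ) (hϰ : 0 < ϰ) (hp1 : 1 < p) (hp2 : p ≤ 2)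
    (f : EuclideanSpace ℝ (Fin d) → ℝ)
    (hfbar : IsGLB (Set.range f) fbar)
    (S S1 S2 : Set (EuclideanSpace ℝ (Fin d))) (hS : S = S1 ∪ S2)
    (hS1ne : S1.Nonempty) (hS1comp : IsCompact S1) (hS1conv : Convex ℝ S1)
    (hS2ne : S2.Nonempty) (hS2comp : IsCompact S2) (hS2conv : Convex ℝ S2)
    (hfS : ∀ w ∈ S, f w = fbar)
    (hgrow : ∀ w, ℓ * Metric.infDist w S ^ p ≤ f w - fbar)
    (hϑ : ℓ * Metric.diam S ^ p - fbar ≤ ϑ)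
    (Z1 Z2 : Set (EuclideanSpace ℝ (Fin d)))
    (hZ1 : Z1 = {w | Metric.infDist w S1 ≤ Metric.infDist w S2})
    (hZ2 : Z2 = {w | Metric.infDist w S2 ≤ Metric.infDist w S1})
    (V1 V2 : EuclideanSpace ℝ (Fin d) → EuclideanSpace ℝ (Fin d))
    (hV1 : ∀ v, V1 v ∈ S1 ∧ ∀ y ∈ S1, ‖v - V1 v‖ ≤ ‖v - y‖)
    (hV2 : ∀ v, V2 v ∈ S2 ∧ ∀ y ∈ S2, ‖v - V2 v‖ ≤ ‖v - y‖)
    (A : EuclideanSpace ℝ (Fin d) → EuclideanSpace ℝ (Fin d) → ℝ)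
    (hA : ∀ w v, A w v = (1/ϰ) * f w * (f v + ϑ) + ‖v - w‖^2) :
    ∀ v : EuclideanSpace ℝ (Fin d),
      (A (V1 v) v - 2 * ((2:ℝ)^p * ϰ / ℓ^2) ^ ((1:ℝ)/(p-1))
          ≤ sInf ((fun w => A w v) '' Z1)
        ∧ sInf ((fun w => A w v) '' Z1) ≤ A (V1 v) v) ∧
      (A (V2 v) v - 2 * ((2:ℝ)^p * ϰ / ℓ^2) ^ ((1:ℝ)/(p-1))
          ≤ sInf ((fun w => A w v) '' Z2)
        ∧ sInf ((fun w => A w v) '' Z2) ≤ A (V2 v) v) := by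
  have hSb : Bornology.IsBounded S := hS ▸ (hS1comp.union hS2comp).isBounded
  have h1S : S1 ⊆ S := hS ▸ Set.subset_union_left
  have h2S : S2 ⊆ S := hS ▸ Set.subset_union_right
  intro v
  constructor
  · refine le_csInf_image_and_csInf_image_le (g := fun w => A w v) ?_ fun w hw => ?_
    · simp [hZ1, infDist_zero_of_mem (hV1 v).1, infDist_nonneg]
    · simp only [hA]
      rw [hZ1] at hw
      exact penalized_sub_le_of_isProjection hℓ hϰ hp1 hSb h1S (hV1 v).1 (hV1 v).2
        (hfS _ (h1S (hV1 v).1)) hgrow hϑ (hS ▸ infDist_le_infDist_union hS1ne hw)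
  · refine le_csInf_image_and_csInf_image_le (g := fun w => A w v) ?_ fun w hw => ?_
    · simp [hZ2, infDist_zero_of_mem (hV2 v).1, infDist_nonneg]
    · simp only [hA]
      rw [hZ2] at hw
      exact penalized_sub_le_of_isProjection hℓ hϰ hp1 hSb h2S (hV2 v).1 (hV2 v).2
        (hfS _ (h2S (hV2 v).1)) hgrow hϑ
        (hS ▸ Set.union_comm S1 S2 ▸ infDist_le_infDist_union hS2ne hw)
end

section
/- Let d ≥ 1, β > 0, α > 0, let g : ℝ^d → ℝ be continuous, v* ∈ ℝ^d, and let ρ be a Borel probability measure on ℝ^d with v* ∈ supp(ρ) and ∫ ‖v − v*‖ dρ(v) < ∞. Set g* := g(v*) and, for r > 0, g_r := sup_{v ∈ B_r(v*)} g(v) − g*. Suppose there exist η, ν > 0 such that g(v) − g* ≥ (η·‖v − v*‖)^{1/ν} − β for all v ∈ ℝ^d. Then for every r > 0 and every q > β: ‖v_α(ρ) − v*‖ ≤ (q + g_r)^ν / η + (e^{−α(q − β)} / ρ(B_r(v*))) · ∫ ‖v − v*‖ dρ(v). -/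
open MeasureTheory Metric

/-- The norm of the deviation of a weighted mean from a point is at most the weighted mean of the
deviations. -/
lemma norm_weightedMean_sub_le {E : Type*} [NormedAddCommGroup E] [NormedSpace ℝ E]
    [CompleteSpace E] [MeasurableSpace E] {ρ : Measure E} {f : E → ℝ} (x : E)
    (hf_nonneg : ∀ w, 0 ≤ f w) (hf : Integrable f ρ) (hf_pos : 0 < ∫ w, f w ∂ρ)
    (hfx : Integrable (fun w => f w • (w - x)) ρ) :
    ‖(∫ w, f w ∂ρ)⁻¹ • ∫ w, f w • w ∂ρ - x‖
      ≤ (∫ w, f w ∂ρ)⁻¹ * ∫ w, f w * ‖w - x‖ ∂ρ := by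
  have hsplit : ∫ w, f w • w ∂ρ = (∫ w, f w • (w - x) ∂ρ) + (∫ w, f w ∂ρ) • x := by
    rw [← integral_smul_const, ← integral_add hfx (hf.smul_const x)]
    simp [smul_sub]
  have hdev : (∫ w, f w ∂ρ)⁻¹ • ∫ w, f w • w ∂ρ - x
      = (∫ w, f w ∂ρ)⁻¹ • ∫ w, f w • (w - x) ∂ρ := by
    rw [hsplit, smul_add, inv_smul_smul₀ hf_pos.ne', add_sub_cancel_right]
  rw [hdev, norm_smul, Real.norm_of_nonneg (inv_nonneg.2 hf_pos.le)]
  gcongr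
  refine (norm_integral_le_integral_norm _).trans_eq ?_
  simp only [norm_smul, Real.norm_of_nonneg (hf_nonneg _)]

/-- Inverse growth: outside the ball of radius `t ^ ν / η` the function exceeds its value at the
centre by at least `t - β`. -/
lemma sub_le_of_rpow_div_lt {t s η ν β y : ℝ} (ht : 0 ≤ t) (hη : 0 < η) (hν : 0 < ν)
    (hs : t ^ ν / η < s) (hgrow : (η * s) ^ ((1 : ℝ) / ν) - β ≤ y) : t - β ≤ y := by
  have hlt : t ^ ν < η * s := by rwa [div_lt_iff₀' hη] at hs
  have hroot : t ≤ (η * s) ^ ((1 : ℝ) / ν) := by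
    calc t = (t ^ ν) ^ ((1 : ℝ) / ν) := by
          rw [one_div, Real.rpow_rpow_inv ht hν.ne']
      _ ≤ (η * s) ^ ((1 : ℝ) / ν) := by gcongr
  linarith

/-- Quantitative Laplace principle, first part (Lemma `lem:qlp`). Membership of `v*` in
the support of `ρ` is expressed by positivity of the mass of all closed balls about
`v*`. -/
theorem stmt_10 {d : ℕ} (hd : 1 ≤ d)
    (β α η ν : ℝ) (hβ : 0 < β) (hα : 0 < α) (hη : 0 < η) (hν : 0 < ν)
    (g : EuclideanSpace ℝ (Fin d) → ℝ) (hg : Continuous g)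
    (vstar : EuclideanSpace ℝ (Fin d))
    (ρ : Measure (EuclideanSpace ℝ (Fin d))) (hρ : IsProbabilityMeasure ρ)
    (hsupp : ∀ r > (0:ℝ), 0 < ρ (Metric.closedBall vstar r))
    (hmom : Integrable (fun v => ‖v - vstar‖) ρ)
    (hgrow : ∀ v, (η * ‖v - vstar‖) ^ ((1:ℝ)/ν) - β ≤ g v - g vstar)
    (vα : EuclideanSpace ℝ (Fin d))
    (hvα : vα = (∫ w, Real.exp (-α * g w) ∂ρ)⁻¹ • ∫ w, Real.exp (-α * g w) • w ∂ρ) :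
    ∀ r > (0:ℝ), ∀ q > β,
      ‖vα - vstar‖
        ≤ (q + (sSup (g '' Metric.closedBall vstar r) - g vstar)) ^ ν / η
          + (Real.exp (-α * (q - β)) / (ρ (Metric.closedBall vstar r)).toReal)
            * ∫ v, ‖v - vstar‖ ∂ρ := by
  intro r hr q hq
  set S := sSup (g '' closedBall vstar r)
  set R := (q + (S - g vstar)) ^ ν / η
  set m := (ρ (closedBall vstar r)).toReal
  have hbdd : BddAbove (g '' closedBall vstar r) :=
    ((isCompact_closedBall vstar r).image hg).bddAbove
  have hS : ∀ v ∈ closedBall vstar r, g v ≤ S := fun v hv =>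
    le_csSup hbdd (Set.mem_image_of_mem g hv)
  have ht : 0 ≤ q + (S - g vstar) := by
    linarith [hS vstar (mem_closedBall_self hr.le)]
  have hR : 0 ≤ R := div_nonneg (Real.rpow_nonneg ht ν) hη.le
  have hm : 0 < m := ENNReal.toReal_pos (hsupp r hr).ne' (measure_ne_top _ _)
  have hlower : ∀ v, g vstar - β ≤ g v := fun v => by
    have : 0 ≤ (η * ‖v - vstar‖) ^ ((1 : ℝ) / ν) := by positivity
    linarith [hgrow v]
  have hcont : Continuous fun w => Real.exp (-α * g w) := by fun_prop
  have hweight : ∀ᵐ w ∂ρ, ‖Real.exp (-α * g w)‖ ≤ Real.exp (-α * (g vstar - β)) :=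
    Filter.Eventually.of_forall fun w => by
      rw [Real.norm_of_nonneg (Real.exp_pos _).le, Real.exp_le_exp]
      nlinarith [hlower w]
  have hint : Integrable (fun w => Real.exp (-α * g w)) ρ :=
    .of_bound hcont.aestronglyMeasurable _ hweight
  have hdev : Integrable (fun w => w - vstar) ρ :=
    (integrable_norm_iff (by fun_prop)).1 hmom
  have hint_norm : Integrable (fun w => Real.exp (-α * g w) * ‖w - vstar‖) ρ :=
    hmom.bdd_mul hcont.aestronglyMeasurable hweight
  have hint_dev : Integrable (fun w => Real.exp (-α * g w) • (w - vstar)) ρ :=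
    hdev.bdd_smul _ hcont.aestronglyMeasurable hweight
  have hZ : Real.exp (-α * S) * m ≤ ∫ w, Real.exp (-α * g w) ∂ρ := by
    calc Real.exp (-α * S) * m
        ≤ ∫ w in closedBall vstar r, Real.exp (-α * g w) ∂ρ := by
          refine setIntegral_ge_of_const_le_real measurableSet_closedBall
            (measure_ne_top _ _) (fun v hv => ?_) hint.integrableOn
          rw [Real.exp_le_exp]
          nlinarith [hS v hv]
      _ ≤ ∫ w, Real.exp (-α * g w) ∂ρ :=
          setIntegral_le_integral hint
            (Filter.Eventually.of_forall fun w => (Real.exp_pos _).le)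
  have hZ_pos : 0 < ∫ w, Real.exp (-α * g w) ∂ρ := lt_of_lt_of_le (by positivity) hZ
  have hpointwise : ∀ v, Real.exp (-α * g v) * ‖v - vstar‖
      ≤ R * Real.exp (-α * g v)
        + Real.exp (-α * (q - β)) * Real.exp (-α * S) * ‖v - vstar‖ := fun v => by
    rcases le_or_gt ‖v - vstar‖ R with hv | hv
    · have : 0 ≤ Real.exp (-α * (q - β)) * Real.exp (-α * S) * ‖v - vstar‖ := by positivity
      nlinarith [Real.exp_pos (-α * g v)]
    · have hfar := sub_le_of_rpow_div_lt ht hη hν hv (hgrow v)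
      have hexp : Real.exp (-α * g v) ≤ Real.exp (-α * (q - β)) * Real.exp (-α * S) := by
        rw [← Real.exp_add, Real.exp_le_exp]
        nlinarith
      have := mul_le_mul_of_nonneg_right hexp (norm_nonneg (v - vstar))
      have := mul_nonneg hR (Real.exp_pos (-α * g v)).le
      linarith
  have hnum : ∫ w, Real.exp (-α * g w) * ‖w - vstar‖ ∂ρ
      ≤ R * (∫ w, Real.exp (-α * g w) ∂ρ)
        + Real.exp (-α * (q - β)) * Real.exp (-α * S) * ∫ v, ‖v - vstar‖ ∂ρ := by
    rw [← integral_const_mul, ← integral_const_mul,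
      ← integral_add (hint.const_mul _) (hmom.const_mul _)]
    exact integral_mono hint_norm ((hint.const_mul _).add (hmom.const_mul _)) hpointwise
  rw [hvα]
  refine (norm_weightedMean_sub_le vstar (fun w => (Real.exp_pos _).le) hint hZ_pos
    hint_dev).trans ?_
  rw [inv_mul_le_iff₀ hZ_pos]
  refine hnum.trans ?_
  have hM : 0 ≤ ∫ v, ‖v - vstar‖ ∂ρ := integral_nonneg fun v => norm_nonneg _
  rw [mul_add, mul_comm R]
  refine add_le_add le_rfl ?_
  calc Real.exp (-α * (q - β)) * Real.exp (-α * S) * ∫ v, ‖v - vstar‖ ∂ρ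
      = Real.exp (-α * S) * m * (Real.exp (-α * (q - β)) / m * ∫ v, ‖v - vstar‖ ∂ρ) := by
        field_simp
    _ ≤ _ := by gcongr
end

section
/- Define f : ℝ → ℝ by f(w) = w² for w ≤ 1, f(w) = min{1, (w−10)² − 1} for 1 ≤ w ≤ 10, and f(w) = (w−10)² − 1 for w ≥ 10. Then for every v ∈ [−1,1], the function w ↦ f(w) + (v − w)² attains its strict global minimum at w = v/2: its value there is v²/2, and f(w) + (v − w)² > v²/2 for every w ≠ v/2. In particular, for every v ∈ [−1,1] the minimizer of w ↦ f(w) + (v−w)² lies in [−1/2, 1/2], far from the unique global minimizer 10 of f. -/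
/-- In the polarized-CBO counterexample, for every `v ∈ [−1,1]` the function
`w ↦ f(w) + (v−w)²` attains its strict global minimum at `w = v/2 ∈ [−1/2,1/2]`,
with value `v²/2`. -/
theorem stmt_16 (f : ℝ → ℝ)
    (h1 : ∀ w : ℝ, w ≤ 1 → f w = w^2)
    (h2 : ∀ w : ℝ, 1 ≤ w → w ≤ 10 → f w = min 1 ((w - 10)^2 - 1))
    (h3 : ∀ w : ℝ, 10 ≤ w → f w = (w - 10)^2 - 1) :
    ∀ v ∈ Set.Icc (-1:ℝ) 1,
      f (v/2) + (v - v/2)^2 = v^2/2 ∧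
      (∀ w : ℝ, w ≠ v/2 → v^2/2 < f w + (v - w)^2) ∧
      v/2 ∈ Set.Icc (-(1/2) : ℝ) (1/2) := by
  rintro v ⟨hv1, hv2⟩
  have hv : v ^ 2 ≤ 1 := by nlinarith
  have far (w : ℝ) : v ^ 2 / 2 < (w - 10) ^ 2 - 1 + (v - w) ^ 2 := by
    nlinarith [sq_nonneg (2 * w - 10 - v)]
  refine ⟨?_, fun w hw => ?_, ?_, ?_⟩
  · rw [h1 (v / 2) (by linarith)]
    ring
  · rcases le_total w 1 with hw1 | hw1
    · rw [h1 w hw1]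
      have : 0 < (w - v / 2) ^ 2 := sq_pos_of_ne_zero (sub_ne_zero.mpr hw)
      nlinarith
    · rcases le_total w 10 with hw10 | hw10
      · rw [h2 w hw1 hw10]
        rcases min_choice 1 ((w - 10) ^ 2 - 1) with h | h <;> rw [h]
        · nlinarith [sq_nonneg (v - w)]
        · exact far w
      · rw [h3 w hw10]
        exact far w
  · linarith
  · linarith
end
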